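/- Under Assumption (A), fix ε ∈ (0,t0) and define the dual value function v1 : C(Ω_ε) → (−∞,∞] (extended-real valued) by v1(f) := inf over finite nonnegative Borel measures μ on [2b(0),∞) of sup over finite nonnegative Borel measures λ on Ω_ε of ( ∫ f dλ − λ(Ω_ε) − ∫ g dμ + ∫∫ r_θ(t,b(t)) λ(dt) μ(dθ) ). Let d_{1,ε} := sup{∫ g dμ : μ (D_{1,ε})-admissible} and p_{1,ε} := inf{λ(Ω_ε) : λ (P_{1,ε})-admissible}. Then: (i) v1(0) = −d_{1,ε}; (ii) v1 is convex, i.e. for all f1, f2 ∈ C(Ω_ε) and α ∈ (0,1), v1(α f1 + (1−α) f2) ≤ α·v1(f1) + (1−α)·v1(f2) in the extended reals; (iii) defining, for a finite signed Borel measure λ on Ω_ε, v1*(λ) := sup_{f ∈ C(Ω_ε)} ( ∫ f dλ − v1(f) ) and v1**(0) := sup over finite signed Borel measures λ on Ω_ε of ( −v1*(λ) ), one has v1**(0) = −p_{1,ε}. In particular d_{1,ε} ≥ p_{1,ε} fails in at most one direction: −d_{1,ε} ≥ −p_{1,ε}, i.e. d_{1,ε} ≤ p_{1,ε}. -/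

import Mathlib

open MeasureTheory Set Filter
open scoped ENNReal NNReal Topology

noncomputable def rTheta (θ t x : ℝ) : ℝ := Real.exp (-θ ^ 2 / (2 * t) + θ * x / t)

noncomputable def rMu (μ : Measure ℝ) (t x : ℝ) : ℝ≥0∞ :=
  ∫⁻ θ, ENNReal.ofReal (rTheta θ t x) ∂μ

/-- Finite nonnegative Borel measures on `[2b(0), ∞)`. -/
def MuSet (b : ℝ → ℝ) : Set (Measure ℝ) :=
  {μ | IsFiniteMeasure μ ∧ μ (Set.Ici (2 * b 0))ᶜ = 0}

/-- Finite nonnegative Borel measures on `Ω_ε = [ε, t0]`. -/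
def LamSet (ε t0 : ℝ) : Set (Measure ℝ) :=
  {lam | IsFiniteMeasure lam ∧ lam (Set.Icc ε t0)ᶜ = 0}

/-- The inner expression
`∫ f dλ − λ(Ω_ε) − ∫ g dμ + ∫∫ r_θ(t,b(t)) λ(dt) μ(dθ)` as an extended real. -/
noncomputable def L1inner (b : ℝ → ℝ) (t0 x0 ε : ℝ) (f : ℝ → ℝ)
    (lam μ : Measure ℝ) : EReal :=
  ((∫ t, f t ∂lam : ℝ) : EReal)
    - ((lam (Set.Icc ε t0) : ℝ≥0∞) : EReal)
    - (((∫⁻ θ, ENNReal.ofReal (rTheta θ t0 x0) ∂μ) : ℝ≥0∞) : EReal)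
    + (((∫⁻ θ, (∫⁻ t, ENNReal.ofReal (rTheta θ t (b t)) ∂lam) ∂μ) : ℝ≥0∞) : EReal)

/-- The dual value function `v1`. -/
noncomputable def v1 (b : ℝ → ℝ) (t0 x0 ε : ℝ) (f : ℝ → ℝ) : EReal :=
  ⨅ μ ∈ MuSet b, ⨆ lam ∈ LamSet ε t0, L1inner b t0 x0 ε f lam μ

/-- Optimal value `d_{1,ε}` of the restricted program `(D_{1,ε})`, as an extended real. -/
noncomputable def d1eps (b : ℝ → ℝ) (t0 x0 ε : ℝ) : EReal :=
  ⨆ μ ∈ {μ ∈ MuSet b | ∀ t ∈ Set.Icc ε t0, rMu μ t (b t) ≤ 1},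
    (((∫⁻ θ, ENNReal.ofReal (rTheta θ t0 x0) ∂μ) : ℝ≥0∞) : EReal)

/-- Optimal value `p_{1,ε}` of the restricted program `(P_{1,ε})`, as an extended real. -/
noncomputable def p1eps (b : ℝ → ℝ) (t0 x0 ε : ℝ) : EReal :=
  ⨅ lam ∈ {lam ∈ LamSet ε t0 | ∀ θ ∈ Set.Ici (2 * b 0),
      ENNReal.ofReal (rTheta θ t0 x0) ≤ ∫⁻ t, ENNReal.ofReal (rTheta θ t (b t)) ∂lam},
    ((lam (Set.Icc ε t0) : ℝ≥0∞) : EReal)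

/-- Integral of `f` against a finite signed measure, via its Jordan decomposition. -/
noncomputable def intSigned (f : ℝ → ℝ) (s : SignedMeasure ℝ) : ℝ :=
  (∫ t, f t ∂s.toJordanDecomposition.posPart)
    - ∫ t, f t ∂s.toJordanDecomposition.negPart

/-- The convex conjugate `v1*` evaluated at a finite signed measure. -/
noncomputable def v1Star (b : ℝ → ℝ) (t0 x0 ε : ℝ) (s : SignedMeasure ℝ) : EReal :=
  ⨆ f ∈ {f : ℝ → ℝ | ContinuousOn f (Set.Icc ε t0)},
    ((intSigned f s : ℝ) : EReal) - v1 b t0 x0 ε f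

/-- The biconjugate `v1**` evaluated at `0`: the supremum of `−v1*(λ)` over all
finite signed Borel measures `λ` on `Ω_ε`. -/
noncomputable def v1StarStarZero (b : ℝ → ℝ) (t0 x0 ε : ℝ) : EReal :=
  ⨆ s ∈ {s : SignedMeasure ℝ |
      s.toJordanDecomposition.posPart (Set.Icc ε t0)ᶜ = 0 ∧
      s.toJordanDecomposition.negPart (Set.Icc ε t0)ᶜ = 0},
    -(v1Star b t0 x0 ε s)

/-!
Since `λ` ranges over a cone, the inner supremum in `v1 f` is infinite unless `f + r_μ ≤ 1` on
`Ω_ε`, and then it equals `-∫ g dμ`. So `-v1 f` is the value of `(D_{1,ε})` with the constraint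
level `1` perturbed to `1 - f`, which gives `v1 0 = -d`. Pairs `(f, μ)` with `f + r_μ ≤ 1` form a
convex set on which the reward is linear, whence convexity; a multiple of `δ_{t0}` is feasible for
`(P_{1,ε})`, and by weak duality this keeps `v1` above `-∞`. Finally `v1* λ` is the supremum of
`∫ f dλ + ∫ g dμ` over those pairs. It is `λ(Ω_ε)` when `λ` is feasible for `(P_{1,ε})`, and `∞`
otherwise: a negative part of `λ` is detected by a direction `(-φ, 0)` with `φ ≥ 0`, a violated
constraint at `θ` by the direction `(-r_θ, δ_θ)`, and along both the constraint is preserved.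
-/


section FiniteMeasures

variable {X Y : Type*} [MeasurableSpace X] [MeasurableSpace Y]

/-- The convex cone of finite measures on `X` that give no mass to the complement of `A`; it stands
for the finite measures on `A` without passing to a subtype. -/
def finiteMeasuresOn (A : Set X) : Submodule ℝ≥0 (Measure X) where
  carrier := {μ | IsFiniteMeasure μ ∧ μ Aᶜ = 0}
  zero_mem' := ⟨inferInstance, rfl⟩
  add_mem' := by
    rintro μ ν ⟨_, hμ⟩ ⟨_, hν⟩
    exact ⟨inferInstance, by rw [Measure.add_apply, hμ, hν, add_zero]⟩
  smul_mem' := by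
    rintro c μ ⟨_, hμ⟩
    exact ⟨inferInstance, by rw [Measure.smul_apply, hμ, smul_zero]⟩

lemma dirac_mem_finiteMeasuresOn {A : Set X} (hA : MeasurableSet A) {x : X} (hx : x ∈ A) :
    Measure.dirac x ∈ finiteMeasuresOn A :=
  ⟨inferInstance, by
    rw [Measure.dirac_apply' _ hA.compl, indicator_of_notMem (notMem_compl_iff.2 hx)]⟩

lemma ae_mem_of_mem_finiteMeasuresOn {A : Set X} {μ : Measure X} (hμ : μ ∈ finiteMeasuresOn A) :
    ∀ᵐ x ∂μ, x ∈ A := mem_ae_iff.2 hμ.2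

lemma restrict_eq_self_of_mem_finiteMeasuresOn {A : Set X} {μ : Measure X}
    (hμ : μ ∈ finiteMeasuresOn A) : μ.restrict A = μ :=
  Measure.restrict_eq_self_of_ae_mem (ae_mem_of_mem_finiteMeasuresOn hμ)

lemma measureReal_eq_univ_of_mem_finiteMeasuresOn {A : Set X} {μ : Measure X}
    (hμ : μ ∈ finiteMeasuresOn A) : μ.real A = μ.real univ := by
  rw [← measureReal_restrict_apply_univ, restrict_eq_self_of_mem_finiteMeasuresOn hμ]

lemma prod_mem_finiteMeasuresOn {A : Set X} {B : Set Y} {μ : Measure X} {ν : Measure Y}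
    (hμ : μ ∈ finiteMeasuresOn A) (hν : ν ∈ finiteMeasuresOn B) :
    μ.prod ν ∈ finiteMeasuresOn (A ×ˢ B) := by
  have := hμ.1
  have := hν.1
  refine ⟨inferInstance, ?_⟩
  rw [compl_prod_eq_union, measure_union_null_iff, Measure.prod_prod, Measure.prod_prod, hμ.2, hν.2,
    zero_mul, mul_zero]
  exact ⟨rfl, rfl⟩

lemma integrable_of_continuousOn_of_bound [TopologicalSpace X] [OpensMeasurableSpace X]
    {A : Set X} (hA : MeasurableSet A) {f : X → ℝ} (hf : ContinuousOn f A)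
    (hbound : ∃ C, ∀ x ∈ A, ‖f x‖ ≤ C) {μ : Measure X} (hμ : μ ∈ finiteMeasuresOn A) :
    Integrable f μ := by
  have := hμ.1
  obtain ⟨C, hC⟩ := hbound
  have hmeas : AEStronglyMeasurable f μ := by
    simpa only [restrict_eq_self_of_mem_finiteMeasuresOn hμ] using
      hf.aestronglyMeasurable (μ := μ) hA
  exact .of_bound hmeas C ((ae_mem_of_mem_finiteMeasuresOn hμ).mono hC)

lemma integral_smul_add_smul_measure {f : X → ℝ} {μ ν : Measure X} (hμ : Integrable f μ)
    (hν : Integrable f ν) (α β : ℝ≥0) :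
    ∫ x, f x ∂(α • μ + β • ν) = α * ∫ x, f x ∂μ + β * ∫ x, f x ∂ν := by
  rw [integral_add_measure hμ.smul_measure_nnreal hν.smul_measure_nnreal,
    integral_smul_nnreal_measure, integral_smul_nnreal_measure]
  rfl

lemma coe_lintegral_ofReal_eq_coe_integral {f : X → ℝ} {μ : Measure X} (hf : Integrable f μ)
    (hpos : 0 ≤ᵐ[μ] f) :
    ((∫⁻ x, ENNReal.ofReal (f x) ∂μ : ℝ≥0∞) : EReal) = ((∫ x, f x ∂μ : ℝ) : EReal) := by
  rw [← ofReal_integral_eq_lintegral_ofReal hf hpos, EReal.coe_ennreal_ofReal,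
    max_eq_left (integral_nonneg_of_ae hpos)]

lemma coe_measure_eq_coe_measureReal (μ : Measure X) [IsFiniteMeasure μ] (A : Set X) :
    ((μ A : ℝ≥0∞) : EReal) = ((μ.real A : ℝ) : EReal) := by
  rw [← ofReal_measureReal, EReal.coe_ennreal_ofReal, max_eq_left measureReal_nonneg]

lemma exists_continuous_nonneg_integral_lt_of_not_le [TopologicalSpace X]
    [TopologicalSpace.PseudoMetrizableSpace X] [BorelSpace X] {μ ν : Measure X}
    [IsFiniteMeasure μ] [IsFiniteMeasure ν] (h : ¬ ν ≤ μ) :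
    ∃ φ : X → ℝ, Continuous φ ∧ 0 ≤ φ ∧ ∫ x, φ x ∂μ < ∫ x, φ x ∂ν := by
  let := TopologicalSpace.pseudoMetrizableSpacePseudoMetric X
  obtain ⟨A, hA, hlt⟩ : ∃ A, MeasurableSet A ∧ μ A < ν A := by
    simpa only [Measure.le_iff, not_forall, not_le, exists_prop] using h
  obtain ⟨F, hFA, hF, hμF⟩ := hA.exists_lt_isClosed_of_ne_top (measure_ne_top ν A) hlt
  have hlim := HasOuterApproxClosed.tendsto_lintegral_apprSeq hF μ
  obtain ⟨n, hn⟩ := (hlim.eventually_lt_const ((measure_mono hFA).trans_lt hμF)).exists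
  refine ⟨fun x => hF.apprSeq n x, by fun_prop, fun x => NNReal.coe_nonneg _, ?_⟩
  rw [← BoundedContinuousFunction.toReal_lintegral_coe_eq_integral,
    ← BoundedContinuousFunction.toReal_lintegral_coe_eq_integral]
  exact (ENNReal.toReal_lt_toReal (BoundedContinuousFunction.lintegral_lt_top_of_nnreal _ _).ne
    (BoundedContinuousFunction.lintegral_lt_top_of_nnreal _ _).ne).2
    (hn.trans_le (HasOuterApproxClosed.measure_le_lintegral hF ν n))

end FiniteMeasures

section ExtendedReals

lemma ereal_eq_top_of_forall_add_mul_le {x : EReal} {a c : ℝ} (hc : 0 < c)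
    (h : ∀ n : ℕ, ((a + n * c : ℝ) : EReal) ≤ x) : x = ⊤ := by
  rw [EReal.eq_top_iff_forall_lt]
  intro y
  obtain ⟨n, hn⟩ := exists_nat_gt ((y - a) / c)
  rw [div_lt_iff₀ hc] at hn
  exact (EReal.coe_lt_coe_iff.2 (by linarith)).trans_le (h n)

lemma ereal_le_mul_add_mul_of_forall_lt {u x y : EReal} {α β : ℝ} (hα : 0 < α) (hβ : 0 < β)
    (hx : x ≠ ⊥) (hy : y ≠ ⊥)
    (h : ∀ a c : ℝ, x < a → y < c → u ≤ ((α * a + β * c : ℝ) : EReal)) :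
    u ≤ α * x + β * y := by
  have hmul_ne_bot {γ : ℝ} (hγ : 0 < γ) {z : EReal} (hz : z ≠ ⊥) : (γ : EReal) * z ≠ ⊥ := by
    simp [EReal.mul_ne_bot, hz, hγ.le]
  have hdiv {γ : ℝ} (hγ : 0 < γ) {z : EReal} {r : ℝ} (hr : (γ : EReal) * z < r) :
      z < ((r / γ : ℝ) : EReal) := by
    rwa [EReal.coe_div, EReal.lt_div_iff (EReal.coe_pos.2 hγ) (EReal.coe_ne_top γ), mul_comm]
  refine EReal.le_add_of_forall_gt (.inl (hmul_ne_bot hα hx)) (.inr (hmul_ne_bot hβ hy)) ?_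
  intro a ha c hc
  induction a with
  | bot => exact absurd ha not_lt_bot
  | top => simp [EReal.top_add_of_ne_bot hc.ne_bot]
  | coe a =>
    induction c with
    | bot => exact absurd hc not_lt_bot
    | top => simp
    | coe c =>
      have := h (a / α) (c / β) (hdiv hα ha) (hdiv hβ hc)
      rwa [mul_div_cancel₀ a hα.ne', mul_div_cancel₀ c hβ.ne', EReal.coe_add] at this

end ExtendedReals

section SupremumOverMeasures

variable {T : Type*} [MeasurableSpace T] {Ω : Set T} {h : T → ℝ}

lemma iSup_integral_add_const_eq_of_nonpos (hh : ∀ t ∈ Ω, h t ≤ 0) (c : ℝ) :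
    ⨆ lam ∈ finiteMeasuresOn Ω, ((∫ t, h t ∂lam + c : ℝ) : EReal) = c := by
  refine le_antisymm (iSup₂_le fun lam hlam => EReal.coe_le_coe_iff.2 ?_) ?_
  · have : ∫ t, h t ∂lam ≤ 0 :=
      integral_nonpos_of_ae ((ae_mem_of_mem_finiteMeasuresOn hlam).mono hh)
    linarith
  · exact le_iSup₂_of_le 0 (zero_mem _) (by simp)

lemma iSup_integral_add_const_eq_top_of_pos [MeasurableSingletonClass T]
    (hΩ : MeasurableSet Ω) {t : T} (ht : t ∈ Ω) (hpos : 0 < h t) (c : ℝ) :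
    ⨆ lam ∈ finiteMeasuresOn Ω, ((∫ t, h t ∂lam + c : ℝ) : EReal) = ⊤ := by
  refine ereal_eq_top_of_forall_add_mul_le (a := c) hpos fun n => ?_
  refine le_iSup₂_of_le ((n : ℝ≥0) • Measure.dirac t)
    (Submodule.smul_mem _ _ (dirac_mem_finiteMeasuresOn hΩ ht)) (EReal.coe_le_coe_iff.2 ?_)
  rw [integral_smul_nnreal_measure, integral_dirac, NNReal.smul_def, NNReal.coe_natCast,
    smul_eq_mul, add_comm]

end SupremumOverMeasures

/-- The integral of `f` against a signed measure, through its Jordan decomposition. -/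
noncomputable def jordanIntegral {T : Type*} [MeasurableSpace T] (f : T → ℝ)
    (s : SignedMeasure T) : ℝ :=
  ∫ t, f t ∂s.toJordanDecomposition.posPart - ∫ t, f t ∂s.toJordanDecomposition.negPart

/-- The data of a linear program over finite measures `μ` on a parameter set `S`, with one
constraint `∫ kernel θ t dμ(θ) ≤ 1` per point `t` of a compact set `Ω` and objective
`∫ gain dμ`. Its linear-programming dual minimises the mass of a finite measure on `Ω`. -/
structure MeasureProgram (Θ T : Type*) [TopologicalSpace Θ] [MeasurableSpace Θ]
    [TopologicalSpace T] where
  S : Set Θ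
  Ω : Set T
  kernel : Θ → T → ℝ
  gain : Θ → ℝ
  measurableSet_S : MeasurableSet S
  isCompact_Ω : IsCompact Ω
  continuousOn_kernel : ContinuousOn (Function.uncurry kernel) (S ×ˢ Ω)
  exists_kernel_bound : ∃ C, ∀ p ∈ S ×ˢ Ω, ‖Function.uncurry kernel p‖ ≤ C
  continuousOn_gain : ContinuousOn gain S
  exists_gain_bound : ∃ C, ∀ θ ∈ S, ‖gain θ‖ ≤ C

namespace MeasureProgram

variable {Θ T : Type*} [TopologicalSpace Θ] [MeasurableSpace Θ] [TopologicalSpace T]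
  (P : MeasureProgram Θ T)

/-- The left-hand side `r_μ` of the constraints. -/
noncomputable def load (μ : Measure Θ) (t : T) : ℝ := ∫ θ, P.kernel θ t ∂μ

/-- The objective of the maximisation program. -/
noncomputable def reward (μ : Measure Θ) : ℝ := ∫ θ, P.gain θ ∂μ

/-- The feasible points of the maximisation program whose constraint level `1` is perturbed to
`1 - f`. -/
def Feasible (f : T → ℝ) (μ : Measure Θ) : Prop :=
  μ ∈ finiteMeasuresOn P.S ∧ ∀ t ∈ P.Ω, f t + P.load μ t ≤ 1

lemma continuousOn_kernel_right {θ : Θ} (hθ : θ ∈ P.S) : ContinuousOn (P.kernel θ) P.Ω :=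
  P.continuousOn_kernel.uncurry_left θ hθ

section Maximisation

variable [OpensMeasurableSpace Θ] {μ : Measure Θ}

lemma integrable_gain (hμ : μ ∈ finiteMeasuresOn P.S) : Integrable P.gain μ :=
  integrable_of_continuousOn_of_bound P.measurableSet_S P.continuousOn_gain P.exists_gain_bound hμ

lemma integrable_kernel_left {t : T} (ht : t ∈ P.Ω) (hμ : μ ∈ finiteMeasuresOn P.S) :
    Integrable (P.kernel · t) μ :=
  integrable_of_continuousOn_of_bound P.measurableSet_S
    (P.continuousOn_kernel.uncurry_right t ht)
    (P.exists_kernel_bound.imp fun _ hC θ hθ => hC (θ, t) ⟨hθ, ht⟩) hμ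

lemma reward_smul_add_smul {ν : Measure Θ} (hμ : μ ∈ finiteMeasuresOn P.S)
    (hν : ν ∈ finiteMeasuresOn P.S) (α β : ℝ≥0) :
    P.reward (α • μ + β • ν) = α * P.reward μ + β * P.reward ν :=
  integral_smul_add_smul_measure (P.integrable_gain hμ) (P.integrable_gain hν) α β

lemma Feasible.convex_combination {P : MeasureProgram Θ T} {f₁ f₂ : T → ℝ} {μ₁ μ₂ : Measure Θ}
    (h₁ : P.Feasible f₁ μ₁) (h₂ : P.Feasible f₂ μ₂) {α β : ℝ≥0} (hαβ : α + β = 1) :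
    P.Feasible (fun t => α * f₁ t + β * f₂ t) (α • μ₁ + β • μ₂) := by
  refine ⟨add_mem (Submodule.smul_mem _ α h₁.1) (Submodule.smul_mem _ β h₂.1), fun t ht => ?_⟩
  have hload : P.load (α • μ₁ + β • μ₂) t = α * P.load μ₁ t + β * P.load μ₂ t :=
    integral_smul_add_smul_measure (P.integrable_kernel_left ht h₁.1)
      (P.integrable_kernel_left ht h₂.1) α β
  calc α * f₁ t + β * f₂ t + P.load (α • μ₁ + β • μ₂) t
      = α * (f₁ t + P.load μ₁ t) + β * (f₂ t + P.load μ₂ t) := by rw [hload]; ring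
    _ ≤ α * 1 + β * 1 := by gcongr <;> [exact h₁.2 t ht; exact h₂.2 t ht]
    _ = 1 := by rw [mul_one, mul_one, ← NNReal.coe_add, hαβ, NNReal.coe_one]

end Maximisation

variable [MeasurableSpace T]

/-- The left-hand side of the constraints of the minimisation program. -/
noncomputable def cover (lam : Measure T) (θ : Θ) : ℝ := ∫ t, P.kernel θ t ∂lam

/-- The feasible points of the minimisation program. -/
def Covers (lam : Measure T) : Prop :=
  lam ∈ finiteMeasuresOn P.Ω ∧ ∀ θ ∈ P.S, P.gain θ ≤ P.cover lam θ

/-- The Lagrangian of the perturbed program, with `lam` as multiplier. -/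
noncomputable def lagrangian (f : T → ℝ) (lam : Measure T) (μ : Measure Θ) : ℝ :=
  ∫ t, f t ∂lam - lam.real P.Ω - P.reward μ + ∫ θ, P.cover lam θ ∂μ

/-- The value function `v1` of the perturbation `f`. -/
noncomputable def value (f : T → ℝ) : EReal :=
  ⨅ μ ∈ finiteMeasuresOn P.S, ⨆ lam ∈ finiteMeasuresOn P.Ω, (P.lagrangian f lam μ : EReal)

/-- The optimal value `d` of the maximisation program. -/
noncomputable def maxReward : EReal := ⨆ μ ∈ {μ | P.Feasible 0 μ}, (P.reward μ : EReal)

/-- The optimal value `p` of the minimisation program. -/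
noncomputable def minMass : EReal := ⨅ lam ∈ {lam | P.Covers lam}, (lam.real P.Ω : EReal)

/-- The signed measures carried by `Ω`, in the sense that both Jordan parts are. -/
def signedMeasures : Set (SignedMeasure T) :=
  {s | s.toJordanDecomposition.posPart P.Ωᶜ = 0 ∧ s.toJordanDecomposition.negPart P.Ωᶜ = 0}

/-- The convex conjugate `v1*` of `value`, over functions continuous on `Ω`. -/
noncomputable def conjugate (s : SignedMeasure T) : EReal :=
  ⨆ f ∈ {f : T → ℝ | ContinuousOn f P.Ω}, (jordanIntegral f s : EReal) - P.value f

/-- The biconjugate `v1**` of `value` at the zero function. -/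
noncomputable def biconjugateZero : EReal := ⨆ s ∈ P.signedMeasures, -P.conjugate s

section Duality

variable [T2Space T] [OpensMeasurableSpace T] {f : T → ℝ} {lam : Measure T}
  {s : SignedMeasure T}

lemma measurableSet_Ω : MeasurableSet P.Ω := P.isCompact_Ω.measurableSet

lemma integrable_of_continuousOn (hf : ContinuousOn f P.Ω) (hlam : lam ∈ finiteMeasuresOn P.Ω) :
    Integrable f lam :=
  integrable_of_continuousOn_of_bound P.measurableSet_Ω hf
    (P.isCompact_Ω.exists_bound_of_continuousOn hf) hlam

lemma jordanIntegral_one_add_mul (hf : ContinuousOn f P.Ω) (hs : s ∈ P.signedMeasures) (c : ℝ) :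
    jordanIntegral (fun t => 1 + c * f t) s = jordanIntegral 1 s + c * jordanIntegral f s := by
  have integral_affine {ν : Measure T} (hν : ν ∈ finiteMeasuresOn P.Ω) :
      ∫ t, (1 + c * f t) ∂ν = ∫ _, 1 ∂ν + c * ∫ t, f t ∂ν := by
    have := hν.1
    rw [integral_add (integrable_const _) ((P.integrable_of_continuousOn hf hν).const_mul c),
      integral_const_mul]
  rw [jordanIntegral, integral_affine ⟨inferInstance, hs.1⟩, integral_affine ⟨inferInstance, hs.2⟩]
  simp only [jordanIntegral, Pi.one_apply]
  ring

variable [OpensMeasurableSpace Θ] [SecondCountableTopologyEither Θ T] {μ : Measure Θ}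

lemma integrable_kernel_prod (hμ : μ ∈ finiteMeasuresOn P.S)
    (hlam : lam ∈ finiteMeasuresOn P.Ω) :
    Integrable (Function.uncurry P.kernel) (μ.prod lam) :=
  integrable_of_continuousOn_of_bound (P.measurableSet_S.prod P.measurableSet_Ω)
    P.continuousOn_kernel P.exists_kernel_bound (prod_mem_finiteMeasuresOn hμ hlam)

lemma integrable_load (hμ : μ ∈ finiteMeasuresOn P.S) (hlam : lam ∈ finiteMeasuresOn P.Ω) :
    Integrable (P.load μ) lam :=
  have := hμ.1
  have := hlam.1
  (P.integrable_kernel_prod hμ hlam).integral_prod_right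

lemma integrable_cover (hμ : μ ∈ finiteMeasuresOn P.S) (hlam : lam ∈ finiteMeasuresOn P.Ω) :
    Integrable (P.cover lam) μ :=
  have := hlam.1
  (P.integrable_kernel_prod hμ hlam).integral_prod_left

lemma integral_cover_eq_integral_load (hμ : μ ∈ finiteMeasuresOn P.S)
    (hlam : lam ∈ finiteMeasuresOn P.Ω) : ∫ θ, P.cover lam θ ∂μ = ∫ t, P.load μ t ∂lam :=
  have := hμ.1
  have := hlam.1
  integral_integral_swap (P.integrable_kernel_prod hμ hlam)

lemma lagrangian_eq_integral_slack (hf : ContinuousOn f P.Ω) (hμ : μ ∈ finiteMeasuresOn P.S)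
    (hlam : lam ∈ finiteMeasuresOn P.Ω) :
    P.lagrangian f lam μ = ∫ t, (f t + P.load μ t - 1) ∂lam + -P.reward μ := by
  have := hlam.1
  have hfint := P.integrable_of_continuousOn hf hlam
  have hload := P.integrable_load hμ hlam
  have hsum : Integrable (fun t => f t + P.load μ t) lam := hfint.add hload
  rw [integral_sub hsum (integrable_const _), integral_add hfint hload,
    integral_const, smul_eq_mul, mul_one, lagrangian, P.integral_cover_eq_integral_load hμ hlam,
    measureReal_eq_univ_of_mem_finiteMeasuresOn hlam]
  ring

lemma iSup_lagrangian_of_feasible (hf : ContinuousOn f P.Ω) (hμ : P.Feasible f μ) :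
    ⨆ lam ∈ finiteMeasuresOn P.Ω, (P.lagrangian f lam μ : EReal) = ((-P.reward μ : ℝ) : EReal) := by
  rw [← iSup_integral_add_const_eq_of_nonpos (h := fun t => f t + P.load μ t - 1)
    (fun t ht => sub_nonpos.2 (hμ.2 t ht))]
  exact biSup_congr fun lam hlam => by rw [P.lagrangian_eq_integral_slack hf hμ.1 hlam]

lemma iSup_lagrangian_of_not_feasible (hf : ContinuousOn f P.Ω) (hμ : μ ∈ finiteMeasuresOn P.S)
    (hinfeas : ¬ P.Feasible f μ) :
    ⨆ lam ∈ finiteMeasuresOn P.Ω, (P.lagrangian f lam μ : EReal) = ⊤ := by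
  obtain ⟨t, ht, hviolated⟩ : ∃ t ∈ P.Ω, 1 < f t + P.load μ t := by
    by_contra! hall
    exact hinfeas ⟨hμ, hall⟩
  rw [← iSup_integral_add_const_eq_top_of_pos P.measurableSet_Ω
    (h := fun t => f t + P.load μ t - 1) ht (sub_pos.2 hviolated) (-P.reward μ)]
  exact biSup_congr fun lam hlam => by rw [P.lagrangian_eq_integral_slack hf hμ hlam]

lemma value_eq_iInf_feasible (hf : ContinuousOn f P.Ω) :
    P.value f = ⨅ μ ∈ {μ | P.Feasible f μ}, ((-P.reward μ : ℝ) : EReal) := by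
  refine le_antisymm (le_iInf₂ fun μ hμ => ?_) (le_iInf₂ fun μ hμ => ?_)
  · exact iInf₂_le_of_le μ hμ.1 (P.iSup_lagrangian_of_feasible hf hμ).le
  · by_cases hfeas : P.Feasible f μ
    · exact iInf₂_le_of_le μ hfeas (P.iSup_lagrangian_of_feasible hf hfeas).ge
    · exact le_top.trans_eq (P.iSup_lagrangian_of_not_feasible hf hμ hfeas).symm

lemma value_le_of_feasible (hf : ContinuousOn f P.Ω) (hμ : P.Feasible f μ) :
    P.value f ≤ ((-P.reward μ : ℝ) : EReal) :=
  (P.value_eq_iInf_feasible hf).trans_le (iInf₂_le μ hμ)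

theorem value_zero : P.value 0 = -P.maxReward := by
  rw [P.value_eq_iInf_feasible (f := 0) continuousOn_const]
  exact (EReal.negOrderIso.map_iSup₂ fun μ (_ : P.Feasible 0 μ) => (P.reward μ : EReal)).symm

lemma integral_add_reward_le_of_covers (hf : ContinuousOn f P.Ω) (hμ : P.Feasible f μ)
    (hlam : P.Covers lam) : ∫ t, f t ∂lam + P.reward μ ≤ lam.real P.Ω := by
  have := hlam.1.1
  have hfint := P.integrable_of_continuousOn hf hlam.1
  have hload := P.integrable_load hμ.1 hlam.1
  calc ∫ t, f t ∂lam + P.reward μ ≤ ∫ t, f t ∂lam + ∫ θ, P.cover lam θ ∂μ := by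
        gcongr
        exact integral_mono_ae (P.integrable_gain hμ.1) (P.integrable_cover hμ.1 hlam.1)
          ((ae_mem_of_mem_finiteMeasuresOn hμ.1).mono hlam.2)
    _ = ∫ t, (f t + P.load μ t) ∂lam := by
        rw [P.integral_cover_eq_integral_load hμ.1 hlam.1, integral_add hfint hload]
    _ ≤ ∫ _, 1 ∂lam :=
        integral_mono_ae (hfint.add hload) (integrable_const _)
          ((ae_mem_of_mem_finiteMeasuresOn hlam.1).mono hμ.2)
    _ = lam.real P.Ω := by
        rw [integral_const, smul_eq_mul, mul_one,
          measureReal_eq_univ_of_mem_finiteMeasuresOn hlam.1]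

theorem maxReward_le_minMass : P.maxReward ≤ P.minMass := by
  refine iSup₂_le fun μ hμ => le_iInf₂ fun lam hlam => EReal.coe_le_coe_iff.2 ?_
  simpa using P.integral_add_reward_le_of_covers (f := 0) continuousOn_const hμ hlam

lemma integral_sub_mass_le_value (hf : ContinuousOn f P.Ω) (hlam : P.Covers lam) :
    ((∫ t, f t ∂lam - lam.real P.Ω : ℝ) : EReal) ≤ P.value f := by
  rw [P.value_eq_iInf_feasible hf]
  refine le_iInf₂ fun μ hμ => EReal.coe_le_coe_iff.2 ?_
  linarith [P.integral_add_reward_le_of_covers hf hμ hlam]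

lemma value_ne_bot (hf : ContinuousOn f P.Ω) (hlam : P.Covers lam) : P.value f ≠ ⊥ :=
  ne_bot_of_le_ne_bot (EReal.coe_ne_bot _) (P.integral_sub_mass_le_value hf hlam)

lemma exists_feasible_of_value_lt (hf : ContinuousOn f P.Ω) {a : ℝ} (h : P.value f < a) :
    ∃ μ, P.Feasible f μ ∧ -P.reward μ < a := by
  rw [P.value_eq_iInf_feasible hf] at h
  simpa only [iInf_lt_iff, mem_ofPred_eq, EReal.coe_lt_coe_iff, exists_prop] using h

/-- Covering measures keep the value function away from `⊥`; without one the right-hand side could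
be `⊤ + ⊥`, which is `⊥` in `EReal`. -/
theorem value_convex_combination_le (hlam : P.Covers lam) {f₁ f₂ : T → ℝ}
    (hf₁ : ContinuousOn f₁ P.Ω) (hf₂ : ContinuousOn f₂ P.Ω) {α β : ℝ} (hα : 0 < α) (hβ : 0 < β)
    (hαβ : α + β = 1) :
    P.value (fun t => α * f₁ t + β * f₂ t)
      ≤ (α : EReal) * P.value f₁ + (β : EReal) * P.value f₂ := by
  refine ereal_le_mul_add_mul_of_forall_lt hα hβ (P.value_ne_bot hf₁ hlam)
    (P.value_ne_bot hf₂ hlam) fun a c ha hc => ?_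
  obtain ⟨μ₁, hμ₁, hlt₁⟩ := P.exists_feasible_of_value_lt hf₁ ha
  obtain ⟨μ₂, hμ₂, hlt₂⟩ := P.exists_feasible_of_value_lt hf₂ hc
  lift α to ℝ≥0 using hα.le
  lift β to ℝ≥0 using hβ.le
  refine (P.value_le_of_feasible (by fun_prop)
    (hμ₁.convex_combination hμ₂ (mod_cast hαβ))).trans (EReal.coe_le_coe_iff.2 ?_)
  calc -P.reward (α • μ₁ + β • μ₂) = α * -P.reward μ₁ + β * -P.reward μ₂ := by
        rw [P.reward_smul_add_smul hμ₁.1 hμ₂.1]; ring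
    _ ≤ α * a + β * c := by gcongr

lemma jordanIntegral_add_reward_le_conjugate (hf : ContinuousOn f P.Ω) (hμ : P.Feasible f μ)
    (s : SignedMeasure T) :
    ((jordanIntegral f s + P.reward μ : ℝ) : EReal) ≤ P.conjugate s :=
  calc ((jordanIntegral f s + P.reward μ : ℝ) : EReal)
      = (jordanIntegral f s : EReal) - ((-P.reward μ : ℝ) : EReal) := by
        rw [← EReal.coe_sub, sub_neg_eq_add]
    _ ≤ jordanIntegral f s - P.value f := EReal.sub_le_sub le_rfl (P.value_le_of_feasible hf hμ)
    _ ≤ P.conjugate s := le_iSup₂ (f := fun f _ => (jordanIntegral f s : EReal) - P.value f) f hf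

-- `(1 + n φ, n μ)` is feasible for every `n`, and the conjugate grows linearly along this ray.
lemma conjugate_eq_top_of_recession {φ : T → ℝ} (hφ : ContinuousOn φ P.Ω)
    (hμ : μ ∈ finiteMeasuresOn P.S) (hrec : ∀ t ∈ P.Ω, φ t + P.load μ t ≤ 0)
    (hs : s ∈ P.signedMeasures) (hpos : 0 < jordanIntegral φ s + P.reward μ) :
    P.conjugate s = ⊤ := by
  refine ereal_eq_top_of_forall_add_mul_le (a := jordanIntegral 1 s) hpos fun n => ?_
  have hfeas : P.Feasible (fun t => 1 + n * φ t) ((n : ℝ≥0) • μ) := by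
    refine ⟨Submodule.smul_mem _ _ hμ, fun t ht => ?_⟩
    have hload : P.load ((n : ℝ≥0) • μ) t = n * P.load μ t := integral_smul_nnreal_measure ..
    linarith [mul_nonpos_of_nonneg_of_nonpos n.cast_nonneg (hrec t ht)]
  have hreward : P.reward ((n : ℝ≥0) • μ) = n * P.reward μ := integral_smul_nnreal_measure ..
  refine le_of_eq_of_le ?_ (P.jordanIntegral_add_reward_le_conjugate (by fun_prop) hfeas s)
  rw [P.jordanIntegral_one_add_mul hφ hs, hreward]
  congr 1
  ring

lemma conjugate_eq_mass_of_covers (hneg : s.toJordanDecomposition.negPart = 0)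
    (hcov : P.Covers s.toJordanDecomposition.posPart) :
    P.conjugate s = (s.toJordanDecomposition.posPart.real P.Ω : EReal) := by
  have hjordan (f : T → ℝ) : jordanIntegral f s = ∫ t, f t ∂s.toJordanDecomposition.posPart := by
    rw [jordanIntegral, hneg, integral_zero_measure, sub_zero]
  refine le_antisymm (iSup₂_le fun f hf => ?_) ?_
  · have hle := P.integral_sub_mass_le_value hf hcov
    rw [EReal.coe_sub] at hle
    rw [hjordan]
    exact EReal.sub_le_of_le_add'
      ((EReal.sub_le_iff_le_add (.inl (EReal.coe_ne_bot _)) (.inl (EReal.coe_ne_top _))).1 hle)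
  · have hfeas : P.Feasible 1 0 := ⟨zero_mem _, fun t _ => by simp [load]⟩
    refine le_of_eq_of_le ?_
      (P.jordanIntegral_add_reward_le_conjugate (f := 1) continuousOn_const hfeas s)
    rw [hjordan, measureReal_eq_univ_of_mem_finiteMeasuresOn hcov.1]
    simp [reward]

end Duality

section Biconjugate

variable [TopologicalSpace.MetrizableSpace T] [BorelSpace T] [OpensMeasurableSpace Θ]
  [SecondCountableTopologyEither Θ T] {s : SignedMeasure T}

lemma negPart_eq_zero_of_conjugate_ne_top (hs : s ∈ P.signedMeasures) (h : P.conjugate s ≠ ⊤) :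
    s.toJordanDecomposition.negPart = 0 := by
  contrapose! h
  have hnot_le : ¬ s.toJordanDecomposition.negPart ≤ s.toJordanDecomposition.posPart := fun hle =>
    h (s.toJordanDecomposition.mutuallySingular.disjoint.symm.eq_bot_of_le hle)
  obtain ⟨φ, hφ, hφ_nonneg, hlt⟩ := exists_continuous_nonneg_integral_lt_of_not_le hnot_le
  refine P.conjugate_eq_top_of_recession (φ := fun t => -φ t) (by fun_prop) (zero_mem _)
    (fun t _ => ?_) hs ?_
  · simpa [load] using hφ_nonneg t
  · simpa [jordanIntegral, reward, integral_neg] using hlt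

lemma covers_posPart_of_conjugate_ne_top [MeasurableSingletonClass Θ] (hs : s ∈ P.signedMeasures)
    (h : P.conjugate s ≠ ⊤) : P.Covers s.toJordanDecomposition.posPart := by
  refine ⟨⟨inferInstance, hs.1⟩, fun θ hθ => ?_⟩
  have hneg := P.negPart_eq_zero_of_conjugate_ne_top hs h
  contrapose! h
  refine P.conjugate_eq_top_of_recession (φ := fun t => -P.kernel θ t) (μ := .dirac θ)
    (P.continuousOn_kernel_right hθ).neg (dirac_mem_finiteMeasuresOn P.measurableSet_S hθ)
    (fun t _ => ?_) hs ?_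
  · simp [load]
  · simpa [jordanIntegral, reward, hneg, integral_neg, cover] using h

theorem biconjugateZero_eq [MeasurableSingletonClass Θ] : P.biconjugateZero = -P.minMass := by
  refine le_antisymm (iSup₂_le fun s hs => EReal.neg_le_neg_iff.2 ?_) (EReal.neg_le.2 ?_)
  · by_cases htop : P.conjugate s = ⊤
    · exact htop ▸ le_top
    · have hcov := P.covers_posPart_of_conjugate_ne_top hs htop
      rw [P.conjugate_eq_mass_of_covers (P.negPart_eq_zero_of_conjugate_ne_top hs htop) hcov]
      exact iInf₂_le _ hcov
  · refine le_iInf₂ fun lam hlam => EReal.neg_le.2 ?_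
    have := hlam.1.1
    let j : JordanDecomposition T := ⟨lam, 0, Measure.MutuallySingular.zero_right⟩
    have hj := j.toJordanDecomposition_toSignedMeasure
    refine le_iSup₂_of_le j.toSignedMeasure ?_ (EReal.neg_le_neg_iff.2 ?_)
    · exact ⟨by rw [hj]; exact hlam.1.2, by rw [hj]; rfl⟩
    · rw [P.conjugate_eq_mass_of_covers (by rw [hj]) (by rw [hj]; exact hlam), hj]

end Biconjugate

end MeasureProgram

section Barrier

lemma rTheta_nonneg (θ t x : ℝ) : 0 ≤ rTheta θ t x := (Real.exp_pos _).le

lemma norm_rTheta_le_exp (θ x : ℝ) {t : ℝ} (ht : 0 < t) :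
    ‖rTheta θ t x‖ ≤ Real.exp (x ^ 2 / (2 * t)) := by
  rw [Real.norm_of_nonneg (rTheta_nonneg θ t x), rTheta, Real.exp_le_exp]
  have hsquare : x ^ 2 / (2 * t) - (-θ ^ 2 / (2 * t) + θ * x / t) = (θ - x) ^ 2 / (2 * t) := by
    field_simp
    ring
  have : 0 ≤ (θ - x) ^ 2 / (2 * t) := by positivity
  linarith

lemma continuousOn_rTheta {X : Type*} [TopologicalSpace X] {A : Set X} {θ t x : X → ℝ}
    (hθ : ContinuousOn θ A) (ht : ContinuousOn t A) (hx : ContinuousOn x A)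
    (htpos : ∀ p ∈ A, 0 < t p) : ContinuousOn (fun p => rTheta (θ p) (t p) (x p)) A := by
  have hne : ∀ p ∈ A, t p ≠ 0 := fun p hp => (htpos p hp).ne'
  have hne' : ∀ p ∈ A, 2 * t p ≠ 0 := fun p hp => mul_ne_zero two_ne_zero (hne p hp)
  unfold rTheta
  fun_prop (disch := assumption)

lemma rTheta_le_exp_mul_rTheta {c θ t x y : ℝ} (ht : 0 < t) (hθ : c ≤ θ) (hxy : x ≤ y) :
    rTheta θ t x ≤ Real.exp (c * (x - y) / t) * rTheta θ t y := by
  rw [rTheta, rTheta, ← Real.exp_add, Real.exp_le_exp]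
  have hslope : θ * (x - y) / t ≤ c * (x - y) / t :=
    div_le_div_of_nonneg_right (mul_le_mul_of_nonpos_right hθ (sub_nonpos.2 hxy)) ht.le
  have hsplit : θ * (x - y) / t = θ * x / t - θ * y / t := by ring
  linarith

variable {b : ℝ → ℝ} {ε t0 : ℝ}

/-- The pair of programs `(D_{1,ε})`, `(P_{1,ε})` as a `MeasureProgram`. -/
noncomputable def barrierProgram (hb : ContinuousOn b (Icc ε t0)) (hε : ε ∈ Ioc 0 t0) (x0 : ℝ) :
    MeasureProgram ℝ ℝ where
  S := Ici (2 * b 0)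
  Ω := Icc ε t0
  kernel θ t := rTheta θ t (b t)
  gain θ := rTheta θ t0 x0
  measurableSet_S := measurableSet_Ici
  isCompact_Ω := isCompact_Icc
  continuousOn_kernel :=
    continuousOn_rTheta continuousOn_fst continuousOn_snd
      (hb.comp continuousOn_snd fun _ hp => hp.2) fun _ hp => hε.1.trans_le hp.2.1
  exists_kernel_bound := by
    have hcont : ContinuousOn (fun t => Real.exp (b t ^ 2 / (2 * t))) (Icc ε t0) :=
      ((hb.pow 2).div (by fun_prop) fun t ht => by linarith [hε.1, ht.1]).rexp
    obtain ⟨C, hC⟩ := isCompact_Icc.exists_bound_of_continuousOn hcont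
    exact ⟨C, fun p hp => (norm_rTheta_le_exp _ _ (hε.1.trans_le hp.2.1)).trans
      ((le_abs_self _).trans (hC p.2 hp.2))⟩
  continuousOn_gain :=
    continuousOn_rTheta continuousOn_id continuousOn_const continuousOn_const
      fun _ _ => hε.1.trans_le hε.2
  exists_gain_bound := ⟨_, fun _ _ => norm_rTheta_le_exp _ _ (hε.1.trans_le hε.2)⟩

variable (hb : ContinuousOn b (Icc ε t0)) (hε : ε ∈ Ioc 0 t0) (x0 : ℝ) {μ lam : Measure ℝ}

lemma barrierProgram_covers_smul_dirac (hx0 : x0 ≤ b t0) :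
    (barrierProgram hb hε x0).Covers
      ((Real.exp (2 * b 0 * (x0 - b t0) / t0)).toNNReal • Measure.dirac t0) := by
  refine ⟨Submodule.smul_mem _ _
    (dirac_mem_finiteMeasuresOn measurableSet_Icc (right_mem_Icc.2 hε.2)), fun θ hθ => ?_⟩
  rw [MeasureProgram.cover, integral_smul_nnreal_measure, integral_dirac, NNReal.smul_def,
    Real.coe_toNNReal _ (Real.exp_pos _).le]
  exact rTheta_le_exp_mul_rTheta (hε.1.trans_le hε.2) hθ hx0

lemma coe_lintegral_gain_eq_coe_reward (hμ : μ ∈ MuSet b) :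
    ((∫⁻ θ, ENNReal.ofReal (rTheta θ t0 x0) ∂μ : ℝ≥0∞) : EReal)
      = (barrierProgram hb hε x0).reward μ :=
  coe_lintegral_ofReal_eq_coe_integral ((barrierProgram hb hε x0).integrable_gain hμ)
    (ae_of_all _ fun _ => rTheta_nonneg ..)

lemma lintegral_kernel_eq_ofReal_cover {θ : ℝ} (hθ : θ ∈ Ici (2 * b 0)) (hlam : lam ∈ LamSet ε t0) :
    ∫⁻ t, ENNReal.ofReal (rTheta θ t (b t)) ∂lam
      = ENNReal.ofReal ((barrierProgram hb hε x0).cover lam θ) :=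
  (ofReal_integral_eq_lintegral_ofReal
    ((barrierProgram hb hε x0).integrable_of_continuousOn
      ((barrierProgram hb hε x0).continuousOn_kernel_right hθ) hlam)
    (ae_of_all _ fun _ => rTheta_nonneg ..)).symm

lemma rMu_eq_ofReal_load {t : ℝ} (ht : t ∈ Icc ε t0) (hμ : μ ∈ MuSet b) :
    rMu μ t (b t) = ENNReal.ofReal ((barrierProgram hb hε x0).load μ t) :=
  (ofReal_integral_eq_lintegral_ofReal ((barrierProgram hb hε x0).integrable_kernel_left ht hμ)
    (ae_of_all _ fun _ => rTheta_nonneg ..)).symm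

lemma cover_barrierProgram_nonneg (lam : Measure ℝ) (θ : ℝ) :
    0 ≤ (barrierProgram hb hε x0).cover lam θ :=
  integral_nonneg fun _ => rTheta_nonneg ..

lemma L1inner_eq_lagrangian (f : ℝ → ℝ) (hμ : μ ∈ MuSet b) (hlam : lam ∈ LamSet ε t0) :
    L1inner b t0 x0 ε f lam μ = ((barrierProgram hb hε x0).lagrangian f lam μ : EReal) := by
  have := hlam.1
  have hcover : ((∫⁻ θ, ∫⁻ t, ENNReal.ofReal (rTheta θ t (b t)) ∂lam ∂μ : ℝ≥0∞) : EReal)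
      = ((∫ θ, (barrierProgram hb hε x0).cover lam θ ∂μ : ℝ) : EReal) := by
    rw [lintegral_congr_ae ((ae_mem_of_mem_finiteMeasuresOn hμ).mono fun θ hθ =>
        lintegral_kernel_eq_ofReal_cover hb hε x0 hθ hlam),
      coe_lintegral_ofReal_eq_coe_integral
        ((barrierProgram hb hε x0).integrable_cover hμ hlam)
        (ae_of_all _ fun θ => cover_barrierProgram_nonneg hb hε x0 lam θ)]
  rw [L1inner, hcover, coe_lintegral_gain_eq_coe_reward hb hε x0 hμ,
    coe_measure_eq_coe_measureReal]
  rfl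

lemma v1_eq_value (f : ℝ → ℝ) : v1 b t0 x0 ε f = (barrierProgram hb hε x0).value f :=
  biInf_congr fun _ hμ => biSup_congr fun _ hlam => L1inner_eq_lagrangian hb hε x0 f hμ hlam

lemma d1eps_eq_maxReward : d1eps b t0 x0 ε = (barrierProgram hb hε x0).maxReward := by
  have hfeas (μ : Measure ℝ) : μ ∈ {μ ∈ MuSet b | ∀ t ∈ Icc ε t0, rMu μ t (b t) ≤ 1}
      ↔ (barrierProgram hb hε x0).Feasible 0 μ := by
    refine and_congr_right fun hμ => forall₂_congr fun t ht => ?_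
    rw [rMu_eq_ofReal_load hb hε x0 ht hμ, ENNReal.ofReal_le_one, Pi.zero_apply, zero_add]
  refine iSup_congr fun μ => iSup_congr_Prop (hfeas μ) fun hμ => ?_
  exact coe_lintegral_gain_eq_coe_reward hb hε x0 hμ.1

lemma p1eps_eq_minMass : p1eps b t0 x0 ε = (barrierProgram hb hε x0).minMass := by
  have hcovers (lam : Measure ℝ) : lam ∈ {lam ∈ LamSet ε t0 | ∀ θ ∈ Ici (2 * b 0),
      ENNReal.ofReal (rTheta θ t0 x0) ≤ ∫⁻ t, ENNReal.ofReal (rTheta θ t (b t)) ∂lam}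
      ↔ (barrierProgram hb hε x0).Covers lam := by
    refine and_congr_right fun hlam => forall₂_congr fun θ hθ => ?_
    rw [lintegral_kernel_eq_ofReal_cover hb hε x0 hθ hlam,
      ENNReal.ofReal_le_ofReal_iff (cover_barrierProgram_nonneg ..)]
    rfl
  refine iInf_congr fun lam => iInf_congr_Prop (hcovers lam) fun hlam => ?_
  have := hlam.1.1
  exact coe_measure_eq_coe_measureReal lam (Icc ε t0)

lemma v1StarStarZero_eq_biconjugateZero :
    v1StarStarZero b t0 x0 ε = (barrierProgram hb hε x0).biconjugateZero := by
  simp only [v1StarStarZero, v1Star, v1_eq_value hb hε x0]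
  rfl

end Barrier

theorem stmt_7_general (b : ℝ → ℝ) (t0 x0 ε : ℝ) (hb : ContinuousOn b (Icc ε t0))
    (hx0 : x0 ≤ b t0) (hε : ε ∈ Ioc 0 t0) :
    v1 b t0 x0 ε (fun _ => 0) = -(d1eps b t0 x0 ε) ∧
    (∀ f1 f2 : ℝ → ℝ, ContinuousOn f1 (Icc ε t0) → ContinuousOn f2 (Icc ε t0) →
      ∀ α : ℝ, α ∈ Ioo (0 : ℝ) 1 →
        v1 b t0 x0 ε (fun t => α * f1 t + (1 - α) * f2 t)
          ≤ (α : EReal) * v1 b t0 x0 ε f1 + ((1 - α : ℝ) : EReal) * v1 b t0 x0 ε f2) ∧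
    v1StarStarZero b t0 x0 ε = -(p1eps b t0 x0 ε) ∧
    d1eps b t0 x0 ε ≤ p1eps b t0 x0 ε := by
  simp only [v1_eq_value hb hε, d1eps_eq_maxReward hb hε, p1eps_eq_minMass hb hε,
    v1StarStarZero_eq_biconjugateZero hb hε]
  exact ⟨(barrierProgram hb hε x0).value_zero,
    fun _ _ hf1 hf2 α hα => (barrierProgram hb hε x0).value_convex_combination_le
      (barrierProgram_covers_smul_dirac hb hε x0 hx0) hf1 hf2 hα.1 (sub_pos.2 hα.2)
      (add_sub_cancel α 1),
    (barrierProgram hb hε x0).biconjugateZero_eq, (barrierProgram hb hε x0).maxReward_le_minMass⟩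

theorem stmt_7 (b : ℝ → ℝ)
    (hba : AnalyticOnNhd ℝ b (Set.Ici 0)) (hbconc : ConcaveOn ℝ (Set.Ici 0) b)
    (hb0 : 0 < b 0) (hbderiv : ∃ d : ℝ, HasDerivWithinAt b d (Set.Ici 0) 0)
    (t0 x0 ε : ℝ) (ht0 : 0 < t0) (hx0 : x0 < b t0) (hε : ε ∈ Set.Ioo 0 t0) :
    v1 b t0 x0 ε (fun _ => 0) = -(d1eps b t0 x0 ε) ∧
    (∀ f1 f2 : ℝ → ℝ, ContinuousOn f1 (Set.Icc ε t0) → ContinuousOn f2 (Set.Icc ε t0) →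
      ∀ α : ℝ, α ∈ Set.Ioo (0 : ℝ) 1 →
        v1 b t0 x0 ε (fun t => α * f1 t + (1 - α) * f2 t)
          ≤ (α : EReal) * v1 b t0 x0 ε f1 + ((1 - α : ℝ) : EReal) * v1 b t0 x0 ε f2) ∧
    v1StarStarZero b t0 x0 ε = -(p1eps b t0 x0 ε) ∧
    d1eps b t0 x0 ε ≤ p1eps b t0 x0 ε := by

  exact stmt_7_general b t0 x0 ε (hba.continuousOn.mono fun t ht => hε.1.le.trans ht.1) hx0.le
    ⟨hε.1, hε.2.le⟩
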